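/- (Lipschitz continuity of the solitons in hyperbolic distance) For every real p > 1 there exists a constant C > 0 such that for all d₁, d₂ ∈ (−1,1), ‖κ(d₁,·) − κ(d₂,·)‖_{H₀} ≤ C |arctanh d₁ − arctanh d₂|. -/

import Mathlib

/-!
Put `a = 1 / (p - 1)`, `q(d, y) = (1 - d²) / (1 + d y)²` and `z(d, y) = (y + d) / (1 + d y)`.
Then `κ(d, y) = κ₀ q(d, y) ^ a`, `(1 - y²) ∂_y κ = -2a (z - y) κ`, and in the coordinates
`d = tanh s`, `y = tanh x` one has `z = tanh (x + s)` and `q = cosh² x / cosh² (x + s)`. Hence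
`log q` and `z` are Lipschitz in `s`, uniformly in `y`. With `δ = |arctanh d₁ - arctanh d₂|` this
gives the pointwise bounds

* `|κ₁ - κ₂| ≤ 2a δ (κ₁ + κ₂)`,
* `(1 - y²) |∂_y κ₁ - ∂_y κ₂| ≤ (8a + 8a²) δ (κ₁ + κ₂)`

(`abs_solKappa_sub_le`, `abs_deriv_sub_le`). Therefore the `H₀` integrand is at most a constant times
`δ² (κ₁² + κ₂²) ρ / (1 - y²)`. Finally, `z(d, ·)` maps `(-1, 1)` into itself with derivative `q`, and
`1 - z² = q (1 - y²)`, so the change of variables `y ↦ z` turns `∫ κ² ρ / (1 - y²) dy` into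
`κ₀² ∫ (1 - z²) ^ (2a - 1) dz`, which is finite and does not depend on `d`
(`lintegral_energyDensity_le`).
-/

open MeasureTheory

noncomputable def kappa0 (p : ℝ) : ℝ := (2 * (p + 1) / (p - 1) ^ 2) ^ ((1 : ℝ) / (p - 1))

noncomputable def solKappa (p d y : ℝ) : ℝ :=
  kappa0 p * (1 - d ^ 2) ^ ((1 : ℝ) / (p - 1)) / (1 + d * y) ^ ((2 : ℝ) / (p - 1))

noncomputable def rho (p y : ℝ) : ℝ := (1 - y ^ 2) ^ ((2 : ℝ) / (p - 1))

/-- The inverse hyperbolic tangent on `(-1,1)`. -/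
noncomputable def arctanh (x : ℝ) : ℝ := (1 / 2) * Real.log ((1 + x) / (1 - x))

/-- The Möbius translation of `(-1, 1)` by `d`. -/
noncomputable def mob (d y : ℝ) : ℝ := (y + d) / (1 + d * y)

/-- The derivative in `y` of the Möbius translation `mob d`. -/
noncomputable def mobDeriv (d y : ℝ) : ℝ := (1 - d ^ 2) / (1 + d * y) ^ 2

/-- `κ² ρ / (1 - y²)`, which controls both parts of the `H₀` norm. -/
noncomputable def energyDensity (p d y : ℝ) : ℝ := solKappa p d y ^ 2 * rho p y / (1 - y ^ 2)

lemma one_add_mul_pos {d y : ℝ} (hd : d ∈ Set.Ioo (-1 : ℝ) 1) (hy : y ∈ Set.Ioo (-1 : ℝ) 1) :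
    0 < 1 + d * y := by
  obtain ⟨h1, h2⟩ := hd
  obtain ⟨h3, h4⟩ := hy
  nlinarith [mul_pos (sub_pos.2 h2) (sub_pos.2 h4),
    mul_pos (show 0 < 1 + d by linarith) (show 0 < 1 + y by linarith)]

lemma one_sub_sq_pos {d : ℝ} (hd : d ∈ Set.Ioo (-1 : ℝ) 1) : 0 < 1 - d ^ 2 := by
  obtain ⟨h1, h2⟩ := hd
  nlinarith

lemma mobDeriv_pos {d y : ℝ} (hd : d ∈ Set.Ioo (-1 : ℝ) 1) (hy : y ∈ Set.Ioo (-1 : ℝ) 1) :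
    0 < mobDeriv d y :=
  div_pos (one_sub_sq_pos hd) (pow_pos (one_add_mul_pos hd hy) 2)

lemma one_sub_mob_sq {d y : ℝ} (hd : d ∈ Set.Ioo (-1 : ℝ) 1) (hy : y ∈ Set.Ioo (-1 : ℝ) 1) :
    1 - mob d y ^ 2 = mobDeriv d y * (1 - y ^ 2) := by
  have h := (one_add_mul_pos hd hy).ne'
  unfold mob mobDeriv
  rw [div_pow, div_mul_eq_mul_div, one_sub_div (pow_ne_zero 2 h)]
  congr 1
  ring

lemma mob_mem {d y : ℝ} (hd : d ∈ Set.Ioo (-1 : ℝ) 1) (hy : y ∈ Set.Ioo (-1 : ℝ) 1) :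
    mob d y ∈ Set.Ioo (-1 : ℝ) 1 := by
  have h : 0 < 1 - mob d y ^ 2 := by
    rw [one_sub_mob_sq hd hy]
    exact mul_pos (mobDeriv_pos hd hy) (one_sub_sq_pos hy)
  constructor <;> nlinarith

lemma hasDerivAt_mob {d y : ℝ} (h : 1 + d * y ≠ 0) : HasDerivAt (mob d) (mobDeriv d y) y := by
  have h1 : HasDerivAt (fun y : ℝ => y + d) 1 y := (hasDerivAt_id y).add_const d
  have h2 : HasDerivAt (fun y : ℝ => 1 + d * y) (d * 1) y :=
    ((hasDerivAt_id y).const_mul d).const_add 1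
  have h3 := h1.div h2 h
  refine h3.congr_deriv ?_
  unfold mobDeriv
  congr 1
  ring

lemma mob_injOn {d : ℝ} (hd : d ∈ Set.Ioo (-1 : ℝ) 1) : Set.InjOn (mob d) (Set.Ioo (-1 : ℝ) 1) := by
  intro y hy w hw h
  have h1 := one_add_mul_pos hd hy
  have h2 := one_add_mul_pos hd hw
  unfold mob at h
  rw [div_eq_div_iff h1.ne' h2.ne'] at h
  have h3 : (1 - d ^ 2) * (y - w) = 0 := by linear_combination h
  rcases mul_eq_zero.1 h3 with h4 | h4
  · exact absurd h4 (one_sub_sq_pos hd).ne'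
  · linarith

lemma kappa0_nonneg {p : ℝ} (hp : 1 < p) : 0 ≤ kappa0 p := by
  unfold kappa0
  have : 0 ≤ 2 * (p + 1) / (p - 1) ^ 2 := by
    have : 0 < p + 1 := by linarith
    positivity
  positivity

lemma solKappa_eq {p d y : ℝ} (hd : d ∈ Set.Ioo (-1 : ℝ) 1) (hy : y ∈ Set.Ioo (-1 : ℝ) 1) :
    solKappa p d y = kappa0 p * mobDeriv d y ^ ((1 : ℝ) / (p - 1)) := by
  have h1 := one_add_mul_pos hd hy
  unfold solKappa mobDeriv
  rw [Real.div_rpow (one_sub_sq_pos hd).le (by positivity), ← Real.rpow_natCast (1 + d * y) 2,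
    ← Real.rpow_mul h1.le, mul_div_assoc]
  congr 3
  push_cast
  ring

lemma solKappa_nonneg {p d y : ℝ} (hp : 1 < p) (hd : d ∈ Set.Ioo (-1 : ℝ) 1)
    (hy : y ∈ Set.Ioo (-1 : ℝ) 1) : 0 ≤ solKappa p d y := by
  rw [solKappa_eq hd hy]
  exact mul_nonneg (kappa0_nonneg hp) (Real.rpow_nonneg (mobDeriv_pos hd hy).le _)

lemma hasDerivAt_solKappa {p d y : ℝ} (hd : d ∈ Set.Ioo (-1 : ℝ) 1)
    (hy : y ∈ Set.Ioo (-1 : ℝ) 1) :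
    HasDerivAt (solKappa p d)
      (-(2 * (1 / (p - 1))) * (mob d y - y) * solKappa p d y / (1 - y ^ 2)) y := by
  have h1 := one_add_mul_pos hd hy
  have h2 : HasDerivAt (fun y : ℝ => 1 + d * y) (d * 1) y :=
    ((hasDerivAt_id y).const_mul d).const_add 1
  have hpow : 0 < (1 + d * y) ^ ((2 : ℝ) / (p - 1)) := Real.rpow_pos_of_pos h1 _
  have h3 := (hasDerivAt_const y (kappa0 p * (1 - d ^ 2) ^ ((1 : ℝ) / (p - 1)))).div
    (h2.rpow_const (p := (2 : ℝ) / (p - 1)) (Or.inl h1.ne')) hpow.ne'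
  refine h3.congr_deriv ?_
  have h4 := (one_sub_sq_pos hy).ne'
  have h5 : mob d y - y = d * (1 - y ^ 2) / (1 + d * y) := by
    unfold mob
    rw [div_sub' h1.ne']
    congr 1
    ring
  rw [h5, Real.rpow_sub_one h1.ne']
  unfold solKappa
  generalize (1 + d * y) ^ ((2 : ℝ) / (p - 1)) = R at *
  generalize 1 - y ^ 2 = Y at *
  generalize (1 - d ^ 2) ^ ((1 : ℝ) / (p - 1)) = Q at *
  rw [show (2 : ℝ) / (p - 1) = 2 * (1 / (p - 1)) by ring]
  generalize (1 : ℝ) / (p - 1) = a at *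
  field_simp
  ring

/-- In the coordinate `arctanh`, the functions `log q` (from both sides) and `log (1 + z)` are
Lipschitz with constant `2`. Here `θ` is the quotient of the values of `(1 + d) / (1 - d)`. -/
lemma mob_ratio_bounds {d₁ d₂ y θ : ℝ} (h1 : d₁ ∈ Set.Ioo (-1 : ℝ) 1)
    (h2 : d₂ ∈ Set.Ioo (-1 : ℝ) 1) (hy : y ∈ Set.Ioo (-1 : ℝ) 1) (hle : d₂ ≤ d₁)
    (hθ : θ = (1 + d₂) * (1 - d₁) / ((1 - d₂) * (1 + d₁))) :
    θ * mobDeriv d₁ y ≤ mobDeriv d₂ y ∧ θ * mobDeriv d₂ y ≤ mobDeriv d₁ y ∧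
      θ * (1 + mob d₁ y) ≤ 1 + mob d₂ y ∧ mob d₂ y ≤ mob d₁ y := by
  have e1 := one_add_mul_pos h1 hy
  have e2 := one_add_mul_pos h2 hy
  have a1 : 0 < 1 + d₁ := by linarith [h1.1]
  have a2 : 0 < 1 + d₂ := by linarith [h2.1]
  have b1 : 0 < 1 - d₁ := by linarith [h1.2]
  have b2 : 0 < 1 - d₂ := by linarith [h2.2]
  have y1 : 0 < 1 + y := by linarith [hy.1]
  have y2 : 0 < 1 - y := by linarith [hy.2]
  -- the two comparisons `u₂ / u₁ ≤ 1` and `(u₂ A + B) / (u₁ A + B) ∈ [u₂ / u₁, 1]`, cleared of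
  -- denominators, where `u = (1 + d) / (1 - d)`, `A = 1 + y`, `B = 1 - y`
  have k1 : (1 - d₁) * (1 + d₂ * y) ≤ (1 - d₂) * (1 + d₁ * y) := by
    nlinarith [mul_nonneg (sub_nonneg.2 hle) y1.le]
  have k2 : (1 + d₂) * (1 + d₁ * y) ≤ (1 + d₁) * (1 + d₂ * y) := by
    nlinarith [mul_nonneg (sub_nonneg.2 hle) y2.le]
  have f1 : 0 < (1 - d₁) * (1 + d₂ * y) := by positivity
  have f2 : 0 < (1 + d₂) * (1 + d₁ * y) := by positivity
  subst hθ
  refine ⟨?_, ?_, ?_, ?_⟩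
  · unfold mobDeriv
    rw [div_mul_div_comm, div_le_div_iff₀ (by positivity) (by positivity)]
    have := pow_le_pow_left₀ f1.le k1 2
    nlinarith [mul_le_mul_of_nonneg_left this (mul_pos a1 a2).le]
  · unfold mobDeriv
    rw [div_mul_div_comm, div_le_div_iff₀ (by positivity) (by positivity)]
    have := pow_le_pow_left₀ f2.le k2 2
    nlinarith [mul_le_mul_of_nonneg_left this (mul_pos b1 b2).le]
  · have g1 : 1 + mob d₁ y = (1 + d₁) * (1 + y) / (1 + d₁ * y) := by
      unfold mob
      rw [one_add_div e1.ne']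
      congr 1
      ring
    have g2 : 1 + mob d₂ y = (1 + d₂) * (1 + y) / (1 + d₂ * y) := by
      unfold mob
      rw [one_add_div e2.ne']
      congr 1
      ring
    rw [g1, g2, div_mul_div_comm, div_le_div_iff₀ (by positivity) (by positivity)]
    have := mul_le_mul_of_nonneg_left k1 (mul_pos (mul_pos a1 a2) y1).le
    nlinarith
  · unfold mob
    rw [div_le_div_iff₀ e2 e1]
    nlinarith [mul_nonneg (sub_nonneg.2 hle) (mul_pos y1 y2).le]

lemma exp_arctanh_sub {d₁ d₂ : ℝ} (h1 : d₁ ∈ Set.Ioo (-1 : ℝ) 1)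
    (h2 : d₂ ∈ Set.Ioo (-1 : ℝ) 1) :
    Real.exp (-(2 * (arctanh d₁ - arctanh d₂)))
      = (1 + d₂) * (1 - d₁) / ((1 - d₂) * (1 + d₁)) := by
  have a1 : 0 < 1 + d₁ := by linarith [h1.1]
  have a2 : 0 < 1 + d₂ := by linarith [h2.1]
  have b1 : 0 < 1 - d₁ := by linarith [h1.2]
  have b2 : 0 < 1 - d₂ := by linarith [h2.2]
  unfold arctanh
  rw [show -(2 * (1 / 2 * Real.log ((1 + d₁) / (1 - d₁)) - 1 / 2 * Real.log ((1 + d₂) / (1 - d₂))))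
    = Real.log ((1 + d₂) / (1 - d₂)) - Real.log ((1 + d₁) / (1 - d₁)) by ring, Real.exp_sub,
    Real.exp_log (by positivity), Real.exp_log (by positivity)]
  field_simp

lemma arctanh_le_of_le {d₁ d₂ : ℝ} (h1 : d₁ ∈ Set.Ioo (-1 : ℝ) 1)
    (h2 : d₂ ∈ Set.Ioo (-1 : ℝ) 1) (hle : d₂ ≤ d₁) : arctanh d₂ ≤ arctanh d₁ := by
  have a1 : 0 < 1 + d₁ := by linarith [h1.1]
  have b2 : 0 < 1 - d₂ := by linarith [h2.2]
  have h : Real.exp (-(2 * (arctanh d₁ - arctanh d₂))) ≤ 1 := by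
    rw [exp_arctanh_sub h1 h2, div_le_one (by positivity)]
    nlinarith
  have := Real.exp_le_one_iff.1 h
  linarith

lemma abs_mob_sub_le {d₁ d₂ y : ℝ} (h1 : d₁ ∈ Set.Ioo (-1 : ℝ) 1)
    (h2 : d₂ ∈ Set.Ioo (-1 : ℝ) 1) (hy : y ∈ Set.Ioo (-1 : ℝ) 1) :
    |mob d₁ y - mob d₂ y| ≤ 4 * |arctanh d₁ - arctanh d₂| := by
  wlog hle : d₂ ≤ d₁ generalizing d₁ d₂
  · rw [abs_sub_comm, abs_sub_comm (arctanh d₁)]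
    exact this h2 h1 (le_of_not_ge hle)
  obtain ⟨-, -, h3, h4⟩ := mob_ratio_bounds h1 h2 hy hle (exp_arctanh_sub h1 h2)
  have h5 := arctanh_le_of_le h1 h2 hle
  rw [abs_of_nonneg (sub_nonneg.2 h4), abs_of_nonneg (sub_nonneg.2 h5)]
  have h6 := Real.add_one_le_exp (-(2 * (arctanh d₁ - arctanh d₂)))
  have h7 := mob_mem h1 hy
  nlinarith [mul_le_mul_of_nonneg_right h6 (show 0 ≤ 1 + mob d₁ y by linarith [h7.1]),
    mul_nonneg (sub_nonneg.2 h5) (sub_nonneg.2 h7.2.le)]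

lemma abs_solKappa_sub_le {p d₁ d₂ y : ℝ} (hp : 1 < p) (h1 : d₁ ∈ Set.Ioo (-1 : ℝ) 1)
    (h2 : d₂ ∈ Set.Ioo (-1 : ℝ) 1) (hy : y ∈ Set.Ioo (-1 : ℝ) 1) :
    |solKappa p d₁ y - solKappa p d₂ y| ≤ 2 * (1 / (p - 1)) * |arctanh d₁ - arctanh d₂| *
      (solKappa p d₁ y + solKappa p d₂ y) := by
  wlog hle : d₂ ≤ d₁ generalizing d₁ d₂
  · rw [abs_sub_comm, abs_sub_comm (arctanh d₁), add_comm (solKappa p d₁ y)]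
    exact this h2 h1 (le_of_not_ge hle)
  obtain ⟨h3, h4, -, -⟩ := mob_ratio_bounds h1 h2 hy hle (exp_arctanh_sub h1 h2)
  have h5 := sub_nonneg.2 (arctanh_le_of_le h1 h2 hle)
  have n1 := solKappa_nonneg hp h1 hy
  have n2 := solKappa_nonneg hp h2 hy
  have q1 := mobDeriv_pos h1 hy
  have q2 := mobDeriv_pos h2 hy
  have ha : 0 < 1 / (p - 1) := by
    have : 0 < p - 1 := by linarith
    positivity
  have k0 := kappa0_nonneg hp
  rw [abs_of_nonneg h5]
  rw [solKappa_eq h1 hy] at *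
  rw [solKappa_eq h2 hy] at *
  generalize (1 : ℝ) / (p - 1) = a at *
  generalize arctanh d₁ - arctanh d₂ = δ at *
  have m1 := Real.rpow_le_rpow (by positivity) h3 ha.le
  have m2 := Real.rpow_le_rpow (by positivity) h4 ha.le
  rw [Real.mul_rpow (Real.exp_pos _).le (by positivity), ← Real.exp_mul] at m1 m2
  have m3 := Real.add_one_le_exp (-(2 * δ) * a)
  have r1 := Real.rpow_pos_of_pos q1 a
  have r2 := Real.rpow_pos_of_pos q2 a
  have m1' := mul_le_mul_of_nonneg_left
    ((mul_le_mul_of_nonneg_right m3 r1.le).trans m1) k0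
  have m2' := mul_le_mul_of_nonneg_left
    ((mul_le_mul_of_nonneg_right m3 r2.le).trans m2) k0
  have hδ : 0 ≤ 2 * a * δ := by positivity
  have t1 := mul_nonneg hδ n1
  have t2 := mul_nonneg hδ n2
  rw [abs_le]
  constructor <;> nlinarith

lemma abs_deriv_sub_le {p d₁ d₂ y : ℝ} (hp : 1 < p) (h1 : d₁ ∈ Set.Ioo (-1 : ℝ) 1)
    (h2 : d₂ ∈ Set.Ioo (-1 : ℝ) 1) (hy : y ∈ Set.Ioo (-1 : ℝ) 1) :
    |deriv (fun y' => solKappa p d₁ y' - solKappa p d₂ y') y| * (1 - y ^ 2) ≤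
      (8 * (1 / (p - 1)) + 8 * (1 / (p - 1)) ^ 2) * |arctanh d₁ - arctanh d₂| *
      (solKappa p d₁ y + solKappa p d₂ y) := by
  have hy' := one_sub_sq_pos hy
  have n1 := solKappa_nonneg hp h1 hy
  have n2 := solKappa_nonneg hp h2 hy
  have ha : 0 < 1 / (p - 1) := by
    have : 0 < p - 1 := by linarith
    positivity
  have hd := ((hasDerivAt_solKappa (p := p) h1 hy).sub (hasDerivAt_solKappa (p := p) h2 hy)).deriv
  have hd' : deriv (fun y' => solKappa p d₁ y' - solKappa p d₂ y') y = _ := hd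
  have B1 := abs_mob_sub_le h1 h2 hy
  have B2 := abs_solKappa_sub_le hp h1 h2 hy
  have B3 : |mob d₂ y - y| ≤ 2 := by
    have := mob_mem h2 hy
    rw [abs_le]
    constructor <;> linarith [this.1, this.2, hy.1, hy.2]
  rw [hd', ← abs_of_pos hy', ← abs_mul, abs_of_pos hy']
  generalize solKappa p d₁ y = k1 at *
  generalize solKappa p d₂ y = k2 at *
  generalize (1 : ℝ) / (p - 1) = a at *
  generalize mob d₁ y = z1 at *
  generalize mob d₂ y = z2 at *
  have hδ := abs_nonneg (arctanh d₁ - arctanh d₂)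
  generalize |arctanh d₁ - arctanh d₂| = δ at *
  rw [show (-(2 * a) * (z1 - y) * k1 / (1 - y ^ 2) - -(2 * a) * (z2 - y) * k2 / (1 - y ^ 2))
      * (1 - y ^ 2) = -(2 * a) * ((z1 - z2) * k1 + (z2 - y) * (k1 - k2)) by field_simp; ring,
    abs_mul, abs_neg, abs_of_pos (by positivity : 0 < 2 * a)]
  have T : |(z1 - z2) * k1 + (z2 - y) * (k1 - k2)| ≤ 4 * δ * k1 + 2 * (2 * a * δ * (k1 + k2)) := by
    refine (abs_add_le _ _).trans (add_le_add ?_ ?_)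
    · rw [abs_mul, abs_of_nonneg n1]
      gcongr
    · rw [abs_mul]
      gcongr
  have := mul_le_mul_of_nonneg_left T (by positivity : 0 ≤ 2 * a)
  have : 0 ≤ a * δ * k2 := by positivity
  nlinarith

lemma energyDensity_nonneg {p d y : ℝ} (hy : y ∈ Set.Ioo (-1 : ℝ) 1) :
    0 ≤ energyDensity p d y := by
  have := one_sub_sq_pos hy
  unfold energyDensity rho
  positivity

lemma energyDensity_eq {p d y : ℝ} (hd : d ∈ Set.Ioo (-1 : ℝ) 1) (hy : y ∈ Set.Ioo (-1 : ℝ) 1) :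
    energyDensity p d y =
      mobDeriv d y * (kappa0 p ^ 2 * (1 - mob d y ^ 2) ^ ((2 : ℝ) / (p - 1) - 1)) := by
  have hq := mobDeriv_pos hd hy
  have hy' := one_sub_sq_pos hy
  rw [one_sub_mob_sq hd hy, energyDensity, solKappa_eq hd hy, rho, Real.mul_rpow hq.le hy'.le,
    Real.rpow_sub_one hq.ne', Real.rpow_sub_one hy'.ne', mul_pow, ← Real.rpow_natCast (_ ^ _) 2,
    ← Real.rpow_mul hq.le]
  rw [show (1 : ℝ) / (p - 1) * (2 : ℕ) = 2 / (p - 1) by push_cast; ring]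
  field_simp

/-- Substitute `z = mob d y`. -/
lemma lintegral_energyDensity_le {p d : ℝ} (hd : d ∈ Set.Ioo (-1 : ℝ) 1) :
    ∫⁻ y in Set.Ioo (-1 : ℝ) 1, ENNReal.ofReal (energyDensity p d y) ≤
      ∫⁻ z in Set.Ioo (-1 : ℝ) 1,
        ENNReal.ofReal (kappa0 p ^ 2 * (1 - z ^ 2) ^ ((2 : ℝ) / (p - 1) - 1)) := by
  calc ∫⁻ y in Set.Ioo (-1 : ℝ) 1, ENNReal.ofReal (energyDensity p d y)
      = ∫⁻ y in Set.Ioo (-1 : ℝ) 1, ENNReal.ofReal |mobDeriv d y| *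
        ENNReal.ofReal (kappa0 p ^ 2 * (1 - mob d y ^ 2) ^ ((2 : ℝ) / (p - 1) - 1)) := by
        refine setLIntegral_congr_fun measurableSet_Ioo fun y hy => ?_
        have hq := mobDeriv_pos hd hy
        rw [energyDensity_eq hd hy, abs_of_pos hq, ENNReal.ofReal_mul hq.le]
    _ = ∫⁻ z in mob d '' Set.Ioo (-1 : ℝ) 1,
        ENNReal.ofReal (kappa0 p ^ 2 * (1 - z ^ 2) ^ ((2 : ℝ) / (p - 1) - 1)) :=
        (lintegral_image_eq_lintegral_abs_deriv_mul measurableSet_Ioo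
          (fun y hy => (hasDerivAt_mob (one_add_mul_pos hd hy).ne').hasDerivWithinAt)
          (mob_injOn hd) (fun z => ENNReal.ofReal
            (kappa0 p ^ 2 * (1 - z ^ 2) ^ ((2 : ℝ) / (p - 1) - 1)))).symm
    _ ≤ _ := lintegral_mono_set (Set.MapsTo.image_subset fun _ hy => mob_mem hd hy)

lemma lintegral_weight_lt_top {p : ℝ} (hp : 1 < p) :
    ∫⁻ z in Set.Ioo (-1 : ℝ) 1,
        ENNReal.ofReal (kappa0 p ^ 2 * (1 - z ^ 2) ^ ((2 : ℝ) / (p - 1) - 1)) < ⊤ := by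
  have hb : 0 < (2 : ℝ) / (p - 1) := div_pos two_pos (by linarith)
  generalize (2 : ℝ) / (p - 1) = b at *
  have I0 : IntervalIntegrable (fun x : ℝ => x ^ (b - 1)) volume 0 2 :=
    intervalIntegral.intervalIntegrable_rpow' (by linarith)
  have I1 : IntervalIntegrable (fun x : ℝ => (1 + x) ^ (b - 1)) volume (-1) 1 := by
    have := I0.comp_add_left 1
    norm_num at this
    exact this
  have I2 : IntervalIntegrable (fun x : ℝ => (1 - x) ^ (b - 1)) volume (-1) 1 := by
    have := (I0.comp_sub_left 1).symm
    norm_num at this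
    exact this
  have I3 : IntegrableOn (fun z : ℝ => kappa0 p ^ 2 *
      (2 ^ b * ((1 + z) ^ (b - 1) + (1 - z) ^ (b - 1)))) (Set.Ioo (-1 : ℝ) 1) volume :=
    (intervalIntegrable_iff_integrableOn_Ioo_of_le (by norm_num)).1
      (((I1.add I2).const_mul _).const_mul _)
  refine lt_of_le_of_lt (setLIntegral_mono' measurableSet_Ioo fun z hz =>
    ENNReal.ofReal_le_ofReal ?_) I3.lintegral_lt_top
  have z1 : 0 < 1 + z := by linarith [hz.1]
  have z2 : 0 < 1 - z := by linarith [hz.2]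
  refine mul_le_mul_of_nonneg_left ?_ (sq_nonneg _)
  have e1 := Real.rpow_le_rpow z1.le (show 1 + z ≤ 2 by linarith [hz.2]) hb.le
  have e2 := Real.rpow_le_rpow z2.le (show 1 - z ≤ 2 by linarith [hz.1]) hb.le
  have p1 := Real.rpow_pos_of_pos z1 (b - 1)
  have p2 := Real.rpow_pos_of_pos z2 (b - 1)
  -- `(1 + z) ^ b (1 - z) ^ (b - 1) + (1 - z) ^ b (1 + z) ^ (b - 1) = 2 (1 - z²) ^ (b - 1)`
  have s1 : (1 + z) ^ b = (1 + z) * (1 + z) ^ (b - 1) := by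
    rw [Real.rpow_sub_one z1.ne']
    field_simp
  have s2 : (1 - z) ^ b = (1 - z) * (1 - z) ^ (b - 1) := by
    rw [Real.rpow_sub_one z2.ne']
    field_simp
  rw [show 1 - z ^ 2 = (1 + z) * (1 - z) by ring, Real.mul_rpow z1.le z2.le]
  rw [s1] at e1
  rw [s2] at e2
  have := mul_le_mul_of_nonneg_right e1 p2.le
  have := mul_le_mul_of_nonneg_right e2 p1.le
  have := mul_pos p1 p2
  nlinarith

lemma measurable_energyDensity (p d : ℝ) : Measurable (energyDensity p d) := by
  unfold energyDensity solKappa rho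
  fun_prop

/-- The `H₀` integrand is controlled by the squared hyperbolic distance. -/
lemma integrand_le {p d₁ d₂ y : ℝ} (hp : 1 < p) (h1 : d₁ ∈ Set.Ioo (-1 : ℝ) 1)
    (h2 : d₂ ∈ Set.Ioo (-1 : ℝ) 1) (hy : y ∈ Set.Ioo (-1 : ℝ) 1) :
    ((solKappa p d₁ y - solKappa p d₂ y) ^ 2
      + (deriv (fun y' => solKappa p d₁ y' - solKappa p d₂ y') y) ^ 2 * (1 - y ^ 2)) * rho p y ≤
    (2 * ((2 * (1 / (p - 1))) ^ 2 + (8 * (1 / (p - 1)) + 8 * (1 / (p - 1)) ^ 2) ^ 2) *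
      (arctanh d₁ - arctanh d₂) ^ 2) * (energyDensity p d₁ y + energyDensity p d₂ y) := by
  have B1 := abs_solKappa_sub_le hp h1 h2 hy
  have B2 := abs_deriv_sub_le hp h1 h2 hy
  have hy' := one_sub_sq_pos hy
  have hy1 : 1 - y ^ 2 ≤ 1 := by nlinarith
  have hρ : 0 ≤ rho p y := Real.rpow_nonneg hy'.le _
  rw [← sq_abs (solKappa p d₁ y - _), ← sq_abs (deriv _ _), ← sq_abs (arctanh d₁ - _)]
  have n3 := abs_nonneg (solKappa p d₁ y - solKappa p d₂ y)
  have n4 := abs_nonneg (deriv (fun y' => solKappa p d₁ y' - solKappa p d₂ y') y)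
  unfold energyDensity
  generalize |solKappa p d₁ y - solKappa p d₂ y| = r at *
  generalize |deriv (fun y' => solKappa p d₁ y' - solKappa p d₂ y') y| = s at *
  generalize |arctanh d₁ - arctanh d₂| = δ at *
  generalize solKappa p d₁ y = k1 at *
  generalize solKappa p d₂ y = k2 at *
  generalize (1 : ℝ) / (p - 1) = a at *
  generalize rho p y = w at *
  generalize 1 - y ^ 2 = Y at *
  have q1 := pow_le_pow_left₀ n3 B1 2
  have q2 := pow_le_pow_left₀ (by positivity) B2 2
  have q3 : r ^ 2 * Y ≤ r ^ 2 := mul_le_of_le_one_right (sq_nonneg _) hy1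
  have q4 : (k1 + k2) ^ 2 ≤ 2 * (k1 ^ 2 + k2 ^ 2) := by nlinarith [sq_nonneg (k1 - k2)]
  have q5 : (r ^ 2 + s ^ 2 * Y) * Y ≤
      ((2 * a) ^ 2 + (8 * a + 8 * a ^ 2) ^ 2) * δ ^ 2 * (2 * (k1 ^ 2 + k2 ^ 2)) := by
    refine le_trans ?_ (mul_le_mul_of_nonneg_left q4 (by positivity))
    calc (r ^ 2 + s ^ 2 * Y) * Y = r ^ 2 * Y + (s * Y) ^ 2 := by ring
      _ ≤ (2 * a * δ * (k1 + k2)) ^ 2 + ((8 * a + 8 * a ^ 2) * δ * (k1 + k2)) ^ 2 := by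
        linarith
      _ = _ := by ring
  rw [← add_div, ← mul_div_assoc, le_div_iff₀ hy']
  calc _ = (r ^ 2 + s ^ 2 * Y) * Y * w := by ring
    _ ≤ _ := mul_le_mul_of_nonneg_right q5 hρ
    _ = _ := by ring

theorem stmt7 (p : ℝ) (hp : 1 < p) :
    ∃ C : ℝ, 0 < C ∧ ∀ d₁ d₂ : ℝ,
      d₁ ∈ Set.Ioo (-1 : ℝ) 1 → d₂ ∈ Set.Ioo (-1 : ℝ) 1 →
      (∫⁻ y in Set.Ioo (-1 : ℝ) 1,
          ENNReal.ofReal (((solKappa p d₁ y - solKappa p d₂ y) ^ 2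
            + (deriv (fun y' => solKappa p d₁ y' - solKappa p d₂ y') y) ^ 2 * (1 - y ^ 2))
            * rho p y)) ^ ((1 : ℝ) / 2)
      ≤ ENNReal.ofReal (C * |arctanh d₁ - arctanh d₂|) := by
  obtain ⟨J, hJ⟩ := ENNReal.lt_iff_exists_coe.1 (lintegral_weight_lt_top hp)
  replace hJ := hJ.1
  set M : ℝ := 2 * ((2 * (1 / (p - 1))) ^ 2 + (8 * (1 / (p - 1)) + 8 * (1 / (p - 1)) ^ 2) ^ 2)
    with hM
  have hM0 : 0 ≤ M := by positivity
  have hC : 0 < M * (2 * (J : ℝ)) + 1 := by positivity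
  refine ⟨√(M * (2 * (J : ℝ)) + 1), Real.sqrt_pos.2 hC, fun d₁ d₂ h1 h2 => ?_⟩
  have key : (∫⁻ y in Set.Ioo (-1 : ℝ) 1,
      ENNReal.ofReal (((solKappa p d₁ y - solKappa p d₂ y) ^ 2
        + (deriv (fun y' => solKappa p d₁ y' - solKappa p d₂ y') y) ^ 2 * (1 - y ^ 2))
        * rho p y)) ≤
      ENNReal.ofReal ((√(M * (2 * (J : ℝ)) + 1) * |arctanh d₁ - arctanh d₂|) ^ 2) := by
    have hMδ : 0 ≤ M * (arctanh d₁ - arctanh d₂) ^ 2 := by positivity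
    calc _ ≤ ∫⁻ y in Set.Ioo (-1 : ℝ) 1, ENNReal.ofReal (M * (arctanh d₁ - arctanh d₂) ^ 2) *
          (ENNReal.ofReal (energyDensity p d₁ y) + ENNReal.ofReal (energyDensity p d₂ y)) := by
          refine setLIntegral_mono' measurableSet_Ioo fun y hy => ?_
          rw [← ENNReal.ofReal_add (energyDensity_nonneg hy) (energyDensity_nonneg hy),
            ← ENNReal.ofReal_mul hMδ]
          exact ENNReal.ofReal_le_ofReal (integrand_le hp h1 h2 hy)
      _ = ENNReal.ofReal (M * (arctanh d₁ - arctanh d₂) ^ 2) *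
          ((∫⁻ y in Set.Ioo (-1 : ℝ) 1, ENNReal.ofReal (energyDensity p d₁ y)) +
            ∫⁻ y in Set.Ioo (-1 : ℝ) 1, ENNReal.ofReal (energyDensity p d₂ y)) := by
          rw [lintegral_const_mul' _ _ ENNReal.ofReal_ne_top,
            lintegral_add_left (measurable_energyDensity p d₁).ennreal_ofReal]
      _ ≤ ENNReal.ofReal (M * (arctanh d₁ - arctanh d₂) ^ 2) * ((J : ENNReal) + J) := by
          rw [← hJ]
          exact mul_le_mul_right (add_le_add (lintegral_energyDensity_le h1)
            (lintegral_energyDensity_le h2)) _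
      _ = ENNReal.ofReal (M * (arctanh d₁ - arctanh d₂) ^ 2 * (J + J)) := by
          rw [ENNReal.ofReal_mul hMδ, ENNReal.ofReal_add J.coe_nonneg J.coe_nonneg, ENNReal.ofReal_coe_nnreal]
      _ ≤ _ := by
          refine ENNReal.ofReal_le_ofReal ?_
          rw [mul_pow, Real.sq_sqrt hC.le, sq_abs]
          nlinarith [sq_nonneg (arctanh d₁ - arctanh d₂)]
  refine (ENNReal.rpow_le_rpow key (by norm_num)).trans_eq ?_
  rw [ENNReal.ofReal_rpow_of_nonneg (by positivity) (by norm_num), ← Real.sqrt_eq_rpow,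
    Real.sqrt_sq (by positivity)]
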